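/- arXiv:1503.01961 — 2 statements merged into one kernel-verified Lean document; each statement's English description precedes it below -/
import Mathlib

section
/- Let 1 < p < ∞ with Hölder conjugate q, and suppose W : ℝ^m × ℝ^n → ℂ^{N×N} is a matrix weight satisfying the product Roudenko A_p condition: there is C < ∞ such that for every product set E = B × B' of balls, ∫_E (∫_E ‖W^{1/p}(z) W^{−1/p}(z')‖^q dz'/|E|)^{p/q} dz/|E| ≤ C. If p ≤ q, then for almost every y ∈ ℝ^n, the weight x ↦ W(x,y) satisfies the Roudenko A_p condition on ℝ^m with the same constant C: for every ball B ⊂ ℝ^m, ∫_B (∫_B ‖W^{1/p}(x,y) W^{−1/p}(x',y)‖^q dx'/|B|)^{p/q} dx/|B| ≤ C. -/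
open MeasureTheory ENNReal ComplexInnerProductSpace
open scoped ComplexOrder

/-- The real power `A ^ s` of a Hermitian matrix, via the functional calculus
(junk value `0` if `A` is not Hermitian). -/
noncomputable def mpow {N : ℕ} (A : Matrix (Fin N) (Fin N) ℂ) (s : ℝ) :
    Matrix (Fin N) (Fin N) ℂ :=
  if hA : A.IsHermitian then hA.cfc (fun x => x ^ s) else 0

open Filter Topology

theorem aux_transl {G M : Type*} [NormedAddCommGroup G] [NormedSpace ℝ G] [FiniteDimensional ℝ G]
    [MeasureSpace G] [BorelSpace G] [(volume : Measure G).IsAddHaarMeasure]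
    [NormedAddCommGroup M] (f : G → M) (hf : MemLp f 1 volume) :
    Tendsto (fun v : G => ∫⁻ z, ‖f (v + z) - f z‖ₑ) (𝓝 0) (𝓝 0) := by
  have : Fact ((1:ℝ≥0∞) ≠ ∞) := ⟨by simp⟩
  have h1 : Continuous (fun v : G => (DomAddAct.mk v) +ᵥ hf.toLp f) := by
    fun_prop
  have h2 := (h1.tendsto 0).edist (tendsto_const_nhds (x := hf.toLp f))
  have h3 : (fun v : G => edist ((DomAddAct.mk v) +ᵥ hf.toLp f) (hf.toLp f)) =
      (fun v : G => ∫⁻ z, ‖f (v + z) - f z‖ₑ) := by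
    funext v
    rw [DomAddAct.mk_vadd_toLp, Lp.edist_toLp_toLp, eLpNorm_one_eq_lintegral_enorm]
    rfl
  rw [h3] at h2
  convert h2
  have : ((DomAddAct.mk (0:G)) +ᵥ hf.toLp f) = hf.toLp f := by
    rw [DomAddAct.mk_vadd_toLp]; congr 1; funext z; simp
  rw [this, edist_self]

theorem aux_seq {X Y M : Type*} [NormedAddCommGroup X] [NormedSpace ℝ X] [FiniteDimensional ℝ X]
    [MeasureSpace X] [BorelSpace X] [(volume : Measure X).IsAddHaarMeasure]
    [NormedAddCommGroup Y] [NormedSpace ℝ Y] [FiniteDimensional ℝ Y]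
    [MeasureSpace Y] [BorelSpace Y] [(volume : Measure Y).IsAddHaarMeasure]
    [NormedAddCommGroup M] (f : X × Y → M) (hfs : StronglyMeasurable f) (hf : MemLp f 1 volume) :
    ∃ ε : ℕ → ℝ, (∀ k, 0 < ε k) ∧ Tendsto ε atTop (𝓝 0) ∧
      ∀ᵐ w : (X × Y) × Y ∂((volume : Measure (X × Y)).prod (volume.restrict (Metric.ball 0 1))),
        Tendsto (fun k => f (w.1.1, w.1.2 + ε k • w.2)) atTop (𝓝 (f w.1)) := by
  have : ProperSpace X := FiniteDimensional.proper_real X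
  have : ProperSpace Y := FiniteDimensional.proper_real Y
  have : ((volume : Measure (X × Y))).IsAddHaarMeasure :=
    inferInstanceAs (((volume : Measure X).prod (volume : Measure Y)).IsAddHaarMeasure)
  set μ := (volume : Measure (X × Y)).prod ((volume : Measure Y).restrict (Metric.ball 0 1)) with hμ
  let e : ℕ → ℝ := fun k => 1 / ((k:ℝ) + 1)
  have he : ∀ k, 0 < e k := fun k => by positivity
  have he0 : Tendsto e atTop (𝓝 0) := tendsto_one_div_add_atTop_nhds_zero_nat
  let F : ℕ → (X × Y) × Y → M := fun k w => f (w.1.1, w.1.2 + e k • w.2)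
  have hFm : ∀ k, StronglyMeasurable (F k) := fun k =>
    hfs.comp_measurable (by fun_prop)
  have hGm : StronglyMeasurable (fun w : (X × Y) × Y => f w.1) := hfs.comp_measurable measurable_fst
  have key : Tendsto (fun k => eLpNorm (F k - fun w => f w.1) 1 μ) atTop (𝓝 0) := by
    have ht := aux_transl f hf
    have hU : (volume : Measure Y) (Metric.ball 0 1) ≠ ∞ := measure_ball_lt_top.ne
    rw [ENNReal.tendsto_nhds_zero]
    intro δ hδ
    obtain ⟨η, hη, hηδ⟩ : ∃ η : ℝ≥0∞, 0 < η ∧ η * volume (Metric.ball (0:Y) 1) ≤ δ := by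
      refine ⟨δ / volume (Metric.ball (0:Y) 1), ENNReal.div_pos hδ.ne' hU, ?_⟩
      rw [ENNReal.div_mul_cancel (Metric.measure_ball_pos _ _ one_pos).ne' hU]
    obtain ⟨r, hr, hr'⟩ := Metric.eventually_nhds_iff.1 ((ENNReal.tendsto_nhds_zero.1 ht) η hη)
    filter_upwards [he0.eventually (gt_mem_nhds hr)] with k hk
    rw [eLpNorm_one_eq_lintegral_enorm, hμ, lintegral_prod_symm']
    · calc _ ≤ ∫⁻ u in Metric.ball (0:Y) 1, η := by
            refine setLIntegral_mono' Metric.isOpen_ball.measurableSet fun u hu => ?_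
            have := @hr' ((0:X), e k • u) (by
              rw [dist_zero_right, Prod.norm_mk, norm_zero, norm_smul, Real.norm_of_nonneg (he k).le]
              rw [mem_ball_zero_iff] at hu
              have := he k
              simp only [sup_lt_iff]
              exact ⟨hr, by nlinarith [norm_nonneg u]⟩)
            refine le_trans (le_of_eq ?_) this
            refine lintegral_congr fun z => ?_
            simp [F, Prod.add_def, add_comm]
        _ = η * volume (Metric.ball (0:Y) 1) := by simp
        _ ≤ δ := hηδ
    · exact ((hFm k).sub hGm).enorm
  have h2 := tendstoInMeasure_of_tendsto_eLpNorm (one_ne_zero) (fun k => (hFm k).aestronglyMeasurable)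
    hGm.aestronglyMeasurable key
  obtain ⟨ns, hns, hns'⟩ := h2.exists_seq_tendsto_ae
  exact ⟨fun k => e (ns k), fun k => he _, he0.comp hns.tendsto_atTop, hns'⟩

theorem aux_seqV {X Y M : Type*} [NormedAddCommGroup X] [NormedSpace ℝ X] [FiniteDimensional ℝ X]
    [MeasureSpace X] [BorelSpace X] [(volume : Measure X).IsAddHaarMeasure]
    [NormedAddCommGroup Y] [NormedSpace ℝ Y] [FiniteDimensional ℝ Y]
    [MeasureSpace Y] [BorelSpace Y] [(volume : Measure Y).IsAddHaarMeasure]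
    [NormedAddCommGroup M] [NormedSpace ℝ M] (V : X × Y → M) (hV : StronglyMeasurable V) (R : ℝ) :
    ∃ ε : ℕ → ℝ, (∀ k, 0 < ε k) ∧ Tendsto ε atTop (𝓝 0) ∧
      ∀ᵐ w : (X × Y) × Y ∂((volume : Measure (X × Y)).prod (volume.restrict (Metric.ball 0 1))),
        w.1 ∈ Metric.ball (0 : X × Y) R →
        Tendsto (fun k => V (w.1.1, w.1.2 + ε k • w.2)) atTop (𝓝 (V w.1)) := by
  have : ProperSpace X := FiniteDimensional.proper_real X
  have : ProperSpace Y := FiniteDimensional.proper_real Y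
  have : ((volume : Measure (X × Y))).IsAddHaarMeasure :=
    inferInstanceAs (((volume : Measure X).prod (volume : Measure Y)).IsAddHaarMeasure)
  let h : M → M := fun v => (Homeomorph.unitBall v : M)
  have hc : Continuous h := continuous_subtype_val.comp Homeomorph.unitBall.continuous
  have hi : IsInducing h := Topology.IsInducing.subtypeVal.comp Homeomorph.unitBall.isInducing
  have hmB : MeasurableSet (Metric.ball (0 : X × Y) R) := Metric.isOpen_ball.measurableSet
  let f : X × Y → M := (Metric.ball (0 : X × Y) R).indicator (fun z => h (V z))
  have hfs : StronglyMeasurable f := (hc.comp_stronglyMeasurable hV).indicator hmB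
  have hf : MemLp f 1 volume := by
    refine (memLp_indicator_iff_restrict hmB).2 ?_
    have : IsFiniteMeasure ((volume : Measure (X × Y)).restrict (Metric.ball 0 R)) :=
      ⟨by simpa using measure_ball_lt_top⟩
    refine MemLp.of_bound (hc.comp_stronglyMeasurable hV).aestronglyMeasurable 1 ?_
    refine Eventually.of_forall fun z => ?_
    have := (Homeomorph.unitBall (V z)).2
    rw [mem_ball_zero_iff] at this
    exact this.le
  obtain ⟨ε, h1, h2, h3⟩ := aux_seq f hfs hf
  refine ⟨ε, h1, h2, ?_⟩
  filter_upwards [h3] with w hw hwR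
  rw [hi.tendsto_nhds_iff]
  have hev : ∀ᶠ k in atTop, (w.1.1, w.1.2 + ε k • w.2) ∈ Metric.ball (0 : X × Y) R := by
    have : Tendsto (fun k => (w.1.1, w.1.2 + ε k • w.2)) atTop (𝓝 w.1) := by
      have h5 : Tendsto (fun k => (w.1.1, w.1.2 + ε k • w.2)) atTop
          (𝓝 (w.1.1, w.1.2 + (0:ℝ) • w.2)) :=
        tendsto_const_nhds.prodMk_nhds (tendsto_const_nhds.add (h2.smul_const _))
      simpa using h5
    exact this.eventually (Metric.isOpen_ball.mem_nhds hwR)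
  have e1 : f w.1 = h (V w.1) := Set.indicator_of_mem hwR _
  rw [e1] at hw
  refine hw.congr' ?_
  filter_upwards [hev] with k hk
  exact Set.indicator_of_mem hk _
theorem aux_fatou {Ω M : Type*} [MeasurableSpace Ω] (ν : Measure Ω) [SFinite ν]
    [TopologicalSpace M] (k : M → M → ℝ≥0∞) (hk : Continuous (Function.uncurry k)) (r : ℝ) (hr : 0 < r)
    (C : ℝ≥0∞) (V : ℕ → Ω → M) (V0 : Ω → M) (hV : ∀ n, StronglyMeasurable (V n))
    (hlim : ∀ᵐ w ∂ν, Tendsto (fun n => V n w) atTop (𝓝 (V0 w)))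
    (h : ∀ n, ∫⁻ w, (∫⁻ w', k (V n w) (V n w') ∂ν) ^ r ∂ν ≤ C) :
    ∫⁻ w, (∫⁻ w', k (V0 w) (V0 w') ∂ν) ^ r ∂ν ≤ C := by
  have hm : ∀ n, Measurable (fun z : Ω × Ω => k (V n z.1) (V n z.2)) := fun n =>
    (hk.comp_stronglyMeasurable (((hV n).comp_measurable measurable_fst).prodMk
      ((hV n).comp_measurable measurable_snd))).measurable
  calc ∫⁻ w, (∫⁻ w', k (V0 w) (V0 w') ∂ν) ^ r ∂ν
      ≤ ∫⁻ w, liminf (fun n => (∫⁻ w', k (V n w) (V n w') ∂ν) ^ r) atTop ∂ν := by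
        refine lintegral_mono_ae ?_
        filter_upwards [hlim] with w hw
        have h1 : ∫⁻ w', k (V0 w) (V0 w') ∂ν ≤
            liminf (fun n => ∫⁻ w', k (V n w) (V n w') ∂ν) atTop := by
          refine le_trans ?_ (lintegral_liminf_le' (fun n =>
            ((hm n).comp (measurable_prodMk_left (x := w))).aemeasurable))
          refine lintegral_mono_ae ?_
          filter_upwards [hlim] with w' hw'
          have : Tendsto (fun n => k (V n w) (V n w')) atTop (𝓝 (k (V0 w) (V0 w'))) :=
            (hk.tendsto (V0 w, V0 w')).comp (hw.prodMk_nhds hw')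
          exact this.liminf_eq.ge
        have h2 := (ENNReal.monotone_rpow_of_nonneg hr.le).map_liminf_of_continuousAt
          (F := atTop) (fun n => ∫⁻ w', k (V n w) (V n w') ∂ν)
          (ENNReal.continuous_rpow_const.continuousAt)
        exact (ENNReal.rpow_le_rpow h1 hr.le).trans h2.le
    _ ≤ liminf (fun n => ∫⁻ w, (∫⁻ w', k (V n w) (V n w') ∂ν) ^ r ∂ν) atTop :=
        lintegral_liminf_le' fun n => ((hm n).lintegral_prod_right'.pow_const r).aemeasurable
    _ ≤ liminf (fun _ : ℕ => C) atTop := liminf_le_liminf (Eventually.of_forall h)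
    _ = C := liminf_const C

theorem aux_map {X Y : Type*} [MeasureSpace X] [SFinite (volume : Measure X)]
    [NormedAddCommGroup Y] [NormedSpace ℝ Y] [FiniteDimensional ℝ Y]
    [MeasureSpace Y] [BorelSpace Y] [(volume : Measure Y).IsAddHaarMeasure]
    (B : Set X) (y : Y) (ε : ℝ) (hε : 0 < ε) (F : X × Y → ℝ≥0∞) :
    ∫⁻ w, F (w.1, y + ε • w.2) ∂((volume (B ×ˢ Metric.ball (0:Y) 1))⁻¹ •
        (volume : Measure (X × Y)).restrict (B ×ˢ Metric.ball (0:Y) 1)) =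
      (∫⁻ z in B ×ˢ Metric.ball y ε, F z) / volume (B ×ˢ Metric.ball y ε) := by
  have : ProperSpace Y := FiniteDimensional.proper_real Y
  let g : Y ≃ₜ Y := (Homeomorph.smulOfNeZero ε hε.ne').trans (Homeomorph.addLeft y)
  let T : X × Y ≃ᵐ X × Y := (MeasurableEquiv.refl X).prodCongr g.toMeasurableEquiv
  have hT : ∀ w, T w = (w.1, y + ε • w.2) := fun w => rfl
  obtain ⟨a, ha0, hat, ha⟩ : ∃ a : ℝ≥0∞, a ≠ 0 ∧ a ≠ ∞ ∧
      Measure.map T volume = a • (volume : Measure (X × Y)) := by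
    have hpos : 0 < |(ε ^ Module.finrank ℝ Y)⁻¹| := by positivity
    refine ⟨ENNReal.ofReal |(ε ^ Module.finrank ℝ Y)⁻¹|, ?_, ENNReal.ofReal_ne_top, ?_⟩
    · exact (ENNReal.ofReal_pos.2 hpos).ne'
    · have h1 : Measure.map (fun u : Y => y + ε • u) volume =
          ENNReal.ofReal |(ε ^ Module.finrank ℝ Y)⁻¹| • (volume : Measure Y) := by
        rw [show (fun u : Y => y + ε • u) = (fun u => y + u) ∘ (fun u => ε • u) from rfl,
          ← Measure.map_map (by fun_prop) (by fun_prop), Measure.map_addHaar_smul _ hε.ne',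
          Measure.map_smul, map_add_left_eq_self]
      have h2 := Measure.map_prod_map (volume : Measure X) (volume : Measure Y)
        (f := id) (g := fun u : Y => y + ε • u) measurable_id (by fun_prop)
      rw [Measure.map_id, h1, Measure.prod_smul_right] at h2
      exact h2.symm
  have hpre : T ⁻¹' (B ×ˢ Metric.ball y ε) = B ×ˢ Metric.ball (0:Y) 1 := by
    ext w
    simp only [Set.mem_preimage, hT, Set.mem_prod, mem_ball_iff_norm, add_sub_cancel_left,
      norm_smul, Real.norm_of_nonneg hε.le, sub_zero]
    rw [mul_lt_iff_lt_one_right hε]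
  have hvol : volume (B ×ˢ Metric.ball (0:Y) 1) = a * volume (B ×ˢ Metric.ball y ε) := by
    rw [← hpre, ← T.map_apply, ha]; rfl
  have hres : Measure.map T (volume.restrict (B ×ˢ Metric.ball (0:Y) 1)) =
      a • (volume : Measure (X × Y)).restrict (B ×ˢ Metric.ball y ε) := by
    rw [← hpre, ← MeasurableEquiv.restrict_map, ha, Measure.restrict_smul]
  have h3 := lintegral_map_equiv (μ := volume.restrict (B ×ˢ Metric.ball (0:Y) 1)) F T
  rw [lintegral_smul_measure]
  simp only [hT] at h3
  rw [← h3, hres, lintegral_smul_measure, hvol, smul_eq_mul, smul_eq_mul,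
    ENNReal.mul_inv (Or.inl ha0) (Or.inl hat), div_eq_mul_inv]
  rw [mul_mul_mul_comm, ENNReal.inv_mul_cancel ha0 hat, one_mul, mul_comm]

theorem aux_main {X Y M : Type*} [NormedAddCommGroup X] [NormedSpace ℝ X] [FiniteDimensional ℝ X]
    [MeasureSpace X] [BorelSpace X] [(volume : Measure X).IsAddHaarMeasure]
    [NormedAddCommGroup Y] [NormedSpace ℝ Y] [FiniteDimensional ℝ Y]
    [MeasureSpace Y] [BorelSpace Y] [(volume : Measure Y).IsAddHaarMeasure]
    [NormedAddCommGroup M] [NormedSpace ℝ M] (V : X × Y → M) (hV : StronglyMeasurable V)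
    (k : M → M → ℝ≥0∞) (hk : Continuous (Function.uncurry k)) (r : ℝ) (hr : 0 < r)
    (C : ℝ≥0∞)
    (h : ∀ (c : X) (ρ₁ : ℝ) (c' : Y) (ρ₂ : ℝ), 0 < ρ₁ → 0 < ρ₂ →
      (∫⁻ z in Metric.ball c ρ₁ ×ˢ Metric.ball c' ρ₂,
        ((∫⁻ z' in Metric.ball c ρ₁ ×ˢ Metric.ball c' ρ₂, k (V z) (V z')) /
          volume (Metric.ball c ρ₁ ×ˢ Metric.ball c' ρ₂)) ^ r) /
          volume (Metric.ball c ρ₁ ×ˢ Metric.ball c' ρ₂) ≤ C) :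
    ∀ᵐ y : Y, ∀ (c : X) (ρ₁ : ℝ), 0 < ρ₁ →
      (∫⁻ x in Metric.ball c ρ₁,
        ((∫⁻ x' in Metric.ball c ρ₁, k (V (x, y)) (V (x', y))) /
          volume (Metric.ball c ρ₁)) ^ r) / volume (Metric.ball c ρ₁) ≤ C := by
  have : ProperSpace X := FiniteDimensional.proper_real X
  have : ProperSpace Y := FiniteDimensional.proper_real Y
  choose ε hε hε0 hlim using fun R : ℕ => aux_seqV V hV (R : ℝ)
  have hae : ∀ R : ℕ, ∀ᵐ y : Y, ∀ᵐ w : X × Y ∂((volume : Measure X).prod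
      ((volume : Measure Y).restrict (Metric.ball 0 1))),
      (w.1, y) ∈ Metric.ball (0 : X × Y) R →
        Tendsto (fun j => V (w.1, y + ε R j • w.2)) atTop (𝓝 (V (w.1, y))) := by
    intro R
    have m1 := (measurePreserving_prodAssoc (volume : Measure Y) (volume : Measure X)
      ((volume : Measure Y).restrict (Metric.ball 0 1))).symm
    have m2 := (Measure.measurePreserving_swap (μ := (volume : Measure Y))
      (ν := (volume : Measure X))).prod
      (MeasurePreserving.id ((volume : Measure Y).restrict (Metric.ball 0 1)))
    exact Measure.ae_ae_of_ae_prod ((m2.comp m1).quasiMeasurePreserving.ae (hlim R))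
  filter_upwards [ae_all_iff.2 hae] with y hy c ρ hρ
  obtain ⟨R, hR⟩ := exists_nat_gt (max (‖c‖ + ρ) ‖y‖)
  rw [max_lt_iff] at hR
  set B := Metric.ball c ρ with hB
  set U := Metric.ball (0 : Y) 1 with hU
  have hBm : MeasurableSet B := Metric.isOpen_ball.measurableSet
  have hUm : MeasurableSet U := Metric.isOpen_ball.measurableSet
  have hU0 : volume U ≠ 0 := (Metric.measure_ball_pos _ _ one_pos).ne'
  have hUt : volume U ≠ ∞ := measure_ball_lt_top.ne
  set ν : Measure (X × Y) := (volume (B ×ˢ U))⁻¹ • (volume : Measure (X × Y)).restrict (B ×ˢ U)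
    with hν
  have hrestr : (volume : Measure (X × Y)).restrict (B ×ˢ U) =
      (volume.restrict B).prod (volume.restrict U) := (Measure.prod_restrict B U).symm
  have hvol : volume (B ×ˢ U) = volume B * volume U := Measure.prod_prod B U
  have hνlim : ∀ᵐ w ∂ν, Tendsto (fun j => V (w.1, y + ε R j • w.2)) atTop (𝓝 (V (w.1, y))) := by
    refine Measure.ae_smul_measure ?_ _
    have h1 : (volume : Measure (X × Y)).restrict (B ×ˢ U) =
        ((volume : Measure X).prod ((volume : Measure Y).restrict U)).restrict (B ×ˢ Set.univ) := by
      rw [hrestr, ← Measure.prod_restrict, Measure.restrict_univ]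
    rw [h1, ae_restrict_iff' (hBm.prod MeasurableSet.univ)]
    filter_upwards [hy R] with w hw hwB
    apply hw
    rw [mem_ball_zero_iff, Prod.norm_mk, sup_lt_iff]
    refine ⟨?_, hR.2⟩
    have h2 : ‖w.1 - c‖ < ρ := mem_ball_iff_norm.1 hwB.1
    have h3 : ‖w.1‖ ≤ ‖w.1 - c‖ + ‖c‖ := by simpa using norm_add_le (w.1 - c) c
    linarith [hR.1]
  have hfat := aux_fatou ν k hk r hr C (fun j w => V (w.1, y + ε R j • w.2)) (fun w => V (w.1, y))
    (fun j => hV.comp_measurable (by fun_prop)) hνlim (fun j => by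
      have h1 := h c ρ y (ε R j) hρ (hε R j)
      have h2 : ∀ v : M, ∫⁻ w', k v (V (w'.1, y + ε R j • w'.2)) ∂ν = _ := fun v =>
        aux_map B y (ε R j) (hε R j) (fun z' => k v (V z'))
      have h3 := aux_map B y (ε R j) (hε R j) (fun z =>
        ((∫⁻ z' in B ×ˢ Metric.ball y (ε R j), k (V z) (V z')) /
          volume (B ×ˢ Metric.ball y (ε R j))) ^ r)
      rw [← h3] at h1
      simp only [h2]
      exact h1)
  have hfst : ∀ g : X → ℝ≥0∞, Measurable g → ∫⁻ w, g w.1 ∂ν = (∫⁻ x in B, g x) / volume B := by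
    intro g hg
    rw [hν, lintegral_smul_measure, hrestr, ← lintegral_map hg measurable_fst,
      Measure.map_fst_prod, lintegral_smul_measure, hvol, Measure.restrict_apply_univ,
      smul_eq_mul, smul_eq_mul, ENNReal.mul_inv (Or.inr hUt) (Or.inr hU0), div_eq_mul_inv]
    rw [mul_mul_mul_comm, mul_comm (volume B)⁻¹, mul_assoc, mul_comm, mul_assoc]
    rw [mul_right_comm, ENNReal.inv_mul_cancel hU0 hUt, one_mul, mul_comm]
  have hVy : StronglyMeasurable (fun x => V (x, y)) := hV.comp_measurable (by fun_prop)
  have hm : Measurable (fun z : X × X => k (V (z.1, y)) (V (z.2, y))) :=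
    (hk.comp_stronglyMeasurable ((hVy.comp_measurable measurable_fst).prodMk
      (hVy.comp_measurable measurable_snd))).measurable
  have hin : ∀ x : X, ∫⁻ w', k (V (x, y)) (V (w'.1, y)) ∂ν =
      (∫⁻ x' in B, k (V (x, y)) (V (x', y))) / volume B := fun x =>
    hfst (fun x' => k (V (x, y)) (V (x', y))) (hm.comp (measurable_prodMk_left (x := x)))
  simp only [hin] at hfat
  rwa [hfst (fun x => ((∫⁻ x' in B, k (V (x, y)) (V (x', y))) / volume B) ^ r)] at hfat
  exact ((hm.lintegral_prod_right').div_const _).pow_const r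

open scoped Matrix.Norms.L2Operator in
theorem aux_cont {N : ℕ} (s : ℝ) :
    ContinuousOn (fun A : Matrix (Fin N) (Fin N) ℂ => Matrix.toEuclideanCLM (𝕜 := ℂ) (mpow A s))
      {A | A.PosDef} := by
  have h1 : ContinuousOn (fun A : Matrix (Fin N) (Fin N) ℂ => cfc (fun x : ℝ => x ^ s) A)
      {A | A.PosDef} := by
    refine ContinuousOn.cfc_of_mem_nhdsSet (s := Set.Ioi 0) (p := IsSelfAdjoint) _ ?_
      continuousOn_id ?_ ?_
    · refine isOpen_Ioi.mem_nhdsSet.2 ?_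
      refine Set.iUnion₂_subset fun A hA => ?_
      intro x hx
      have hH : A.IsHermitian := hA.isHermitian
      obtain ⟨i, rfl⟩ := (hH.spectrum_real_eq_range_eigenvalues ▸ hx : x ∈ Set.range hH.eigenvalues)
      exact hA.eigenvalues_pos i
    · intro A hA
      exact hA.isHermitian
    · intro x hx
      exact (Real.continuousAt_rpow_const x s (Or.inl (ne_of_gt hx))).continuousWithinAt
  have h2 : Continuous (fun A : Matrix (Fin N) (Fin N) ℂ => Matrix.toEuclideanCLM (𝕜 := ℂ) A) :=
    LinearMap.continuous_of_finiteDimensional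
      ((Matrix.toEuclideanCLM (n := Fin N) (𝕜 := ℂ)).toAlgEquiv.toLinearMap)
  refine (h2.comp_continuousOn h1).congr fun A hA => ?_
  have hH : A.IsHermitian := hA.isHermitian
  simp only [mpow, hH, dif_pos, Function.comp, Matrix.IsHermitian.cfc_eq]

theorem aux_meas1 {Ω : Type*} [MeasurableSpace Ω] {N : ℕ} (W : Ω → Matrix (Fin N) (Fin N) ℂ)
    (hW : ∀ i j, Measurable fun z => W z i j) : StronglyMeasurable W := by
  have hW1 : Measurable (fun z => (fun i j => W z i j : Fin N → Fin N → ℂ)) :=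
    measurable_pi_iff.2 fun i => measurable_pi_iff.2 fun j => hW i j
  exact hW1.stronglyMeasurable

theorem aux_meas2 {Ω β γ : Type*} [MeasurableSpace Ω] [TopologicalSpace β] [TopologicalSpace γ]
   [TopologicalSpace.PseudoMetrizableSpace β] (f : Ω → β) (hf : StronglyMeasurable f) (P : Set β) (hP : ∀ z, f z ∈ P)
   (g : β → γ) (hg : ContinuousOn g P) : StronglyMeasurable (fun z => g (f z)) := by
  have hW4 : StronglyMeasurable (fun z => (⟨f z, hP z⟩ : P)) := 
    (Embedding.comp_stronglyMeasurable_iff IsEmbedding.subtypeVal).1 hf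
  have h2 : Continuous (fun A : P => g A.1) := hg.comp_continuous continuous_subtype_val (fun A => A.2)
  exact h2.comp_stronglyMeasurable hW4

open scoped Matrix.Norms.L2Operator in
theorem aux_meas {Ω : Type*} [MeasurableSpace Ω] {N : ℕ} (s : ℝ) (W : Ω → Matrix (Fin N) (Fin N) ℂ)
    (hW : ∀ i j, Measurable fun z => W z i j) (hpos : ∀ z, (W z).PosDef) :
    StronglyMeasurable (fun z => Matrix.toEuclideanCLM (𝕜 := ℂ) (mpow (W z) s)) :=
  aux_meas2 W (aux_meas1 W hW) {A | A.PosDef} hpos _ (aux_cont s)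

set_option maxHeartbeats 1000000 in
/-- If `W` satisfies the product Roudenko `A_p` condition on `ℝ^m × ℝ^n` with constant `C`
and `p ≤ q`, then for a.e. `y` the weight `x ↦ W(x,y)` satisfies the Roudenko `A_p`
condition on `ℝ^m` with the same constant. -/
theorem roudenko_product_implies_uniform_slice
    {m n N : ℕ} (p q : ℝ) (hp : 1 < p) (hpq : 1 / p + 1 / q = 1) (hpleq : p ≤ q)
    (W : EuclideanSpace ℝ (Fin m) × EuclideanSpace ℝ (Fin n) → Matrix (Fin N) (Fin N) ℂ)
    (hWmeas : ∀ i j, Measurable fun z => W z i j)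
    (hWpos : ∀ᵐ z, (W z).PosDef)
    (C : ℝ) (hC : 0 ≤ C)
    (hRoudenko : ∀ (c : EuclideanSpace ℝ (Fin m)) (ρ₁ : ℝ) (c' : EuclideanSpace ℝ (Fin n))
        (ρ₂ : ℝ), 0 < ρ₁ → 0 < ρ₂ →
        (∫⁻ z in (Metric.ball c ρ₁) ×ˢ (Metric.ball c' ρ₂),
            ((∫⁻ z' in (Metric.ball c ρ₁) ×ˢ (Metric.ball c' ρ₂),
                (‖Matrix.toEuclideanCLM (𝕜 := ℂ)
                    (mpow (W z) (1 / p) * mpow (W z') (-(1 / p)))‖₊ : ℝ≥0∞) ^ q) /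
              volume ((Metric.ball c ρ₁) ×ˢ (Metric.ball c' ρ₂))) ^ (p / q)) /
          volume ((Metric.ball c ρ₁) ×ˢ (Metric.ball c' ρ₂)) ≤ ENNReal.ofReal C) :
    ∀ᵐ y : EuclideanSpace ℝ (Fin n),
      ∀ (c : EuclideanSpace ℝ (Fin m)) (ρ₁ : ℝ), 0 < ρ₁ →
        (∫⁻ x in Metric.ball c ρ₁,
            ((∫⁻ x' in Metric.ball c ρ₁,
                (‖Matrix.toEuclideanCLM (𝕜 := ℂ)
                    (mpow (W (x, y)) (1 / p) * mpow (W (x', y)) (-(1 / p)))‖₊ : ℝ≥0∞) ^ q) /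
              volume (Metric.ball c ρ₁)) ^ (p / q)) /
          volume (Metric.ball c ρ₁) ≤ ENNReal.ofReal C := by
  have hq : 0 < q := by linarith
  obtain ⟨S, hSsub, hSm, hS0⟩ := exists_measurable_superset_of_null (ae_iff.1 hWpos)
  classical
  let W' : EuclideanSpace ℝ (Fin m) × EuclideanSpace ℝ (Fin n) → Matrix (Fin N) (Fin N) ℂ :=
    fun z => if z ∈ S then 1 else W z
  have hW'pos : ∀ z, (W' z).PosDef := by
    intro z
    by_cases hz : z ∈ S
    · simp only [W', hz, if_true]; exact Matrix.PosDef.one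
    · simp only [W', hz, if_false]
      by_contra hc
      exact hz (hSsub hc)
  have hW'meas : ∀ i j, Measurable fun z => W' z i j := by
    intro i j
    have : (fun z => W' z i j) = fun z => if z ∈ S then (1 : Matrix (Fin N) (Fin N) ℂ) i j
        else W z i j := by
      funext z
      by_cases hz : z ∈ S <;> simp [W', hz]
    rw [this]
    exact Measurable.ite hSm measurable_const (hWmeas i j)
  have hWW : ∀ᵐ z, W z = W' z := by
    have : ∀ᵐ z, z ∉ S := by rw [ae_iff]; simpa using hS0
    filter_upwards [this] with z hz
    simp [W', hz]
  let V : EuclideanSpace ℝ (Fin m) × EuclideanSpace ℝ (Fin n) →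
      (EuclideanSpace ℂ (Fin N) →L[ℂ] EuclideanSpace ℂ (Fin N)) ×
      (EuclideanSpace ℂ (Fin N) →L[ℂ] EuclideanSpace ℂ (Fin N)) :=
    fun z => (Matrix.toEuclideanCLM (𝕜 := ℂ) (mpow (W' z) (1 / p)),
      Matrix.toEuclideanCLM (𝕜 := ℂ) (mpow (W' z) (-(1 / p))))
  have hV : StronglyMeasurable V :=
    (aux_meas (1 / p) W' hW'meas hW'pos).prodMk (aux_meas (-(1 / p)) W' hW'meas hW'pos)
  let k : (EuclideanSpace ℂ (Fin N) →L[ℂ] EuclideanSpace ℂ (Fin N)) ×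
      (EuclideanSpace ℂ (Fin N) →L[ℂ] EuclideanSpace ℂ (Fin N)) →
      (EuclideanSpace ℂ (Fin N) →L[ℂ] EuclideanSpace ℂ (Fin N)) ×
      (EuclideanSpace ℂ (Fin N) →L[ℂ] EuclideanSpace ℂ (Fin N)) → ℝ≥0∞ :=
    fun a b => (‖a.1 * b.2‖₊ : ℝ≥0∞) ^ q
  have hk : Continuous (Function.uncurry k) := by
    have h1 : Continuous (fun t : ((EuclideanSpace ℂ (Fin N) →L[ℂ] EuclideanSpace ℂ (Fin N)) ×
      (EuclideanSpace ℂ (Fin N) →L[ℂ] EuclideanSpace ℂ (Fin N))) ×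
      ((EuclideanSpace ℂ (Fin N) →L[ℂ] EuclideanSpace ℂ (Fin N)) ×
      (EuclideanSpace ℂ (Fin N) →L[ℂ] EuclideanSpace ℂ (Fin N))) => t.1.1 * t.2.2) :=
      (continuous_fst.comp continuous_fst).mul (continuous_snd.comp continuous_snd)
    exact ENNReal.continuous_rpow_const.comp (ENNReal.continuous_coe.comp h1.nnnorm)
  have hkV : ∀ z z', W z = W' z → W z' = W' z' →
      (‖Matrix.toEuclideanCLM (𝕜 := ℂ)
        (mpow (W z) (1 / p) * mpow (W z') (-(1 / p)))‖₊ : ℝ≥0∞) ^ q = k (V z) (V z') := by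
    intro z z' h1 h2
    simp only [k, V, h1, h2, map_mul]
  have hmain := aux_main V hV k hk (p / q) (by positivity) (ENNReal.ofReal C) (by
    intro c ρ₁ c' ρ₂ h1 h2
    refine le_trans (le_of_eq ?_) (hRoudenko c ρ₁ c' ρ₂ h1 h2)
    refine congrArg (fun t : ℝ≥0∞ => t / _) ?_
    refine lintegral_congr_ae ?_
    filter_upwards [ae_restrict_of_ae hWW] with z hz
    refine congrArg (fun t : ℝ≥0∞ => (t / _) ^ (p / q)) ?_
    refine lintegral_congr_ae ?_
    filter_upwards [ae_restrict_of_ae hWW] with z' hz'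
    exact (hkV z z' hz hz').symm)
  have hslice : ∀ᵐ y : EuclideanSpace ℝ (Fin n), ∀ᵐ x : EuclideanSpace ℝ (Fin m),
      W (x, y) = W' (x, y) := by
    have h1 := (Measure.measurePreserving_swap
      (μ := (volume : Measure (EuclideanSpace ℝ (Fin n))))
      (ν := (volume : Measure (EuclideanSpace ℝ (Fin m))))).quasiMeasurePreserving.ae hWW
    exact Measure.ae_ae_of_ae_prod h1
  filter_upwards [hmain, hslice] with y hy hys c ρ₁ h1
  refine le_trans (le_of_eq ?_) (hy c ρ₁ h1)
  refine congrArg (fun t : ℝ≥0∞ => t / _) ?_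
  refine lintegral_congr_ae ?_
  filter_upwards [ae_restrict_of_ae hys] with x hx
  refine congrArg (fun t : ℝ≥0∞ => (t / _) ^ (p / q)) ?_
  refine lintegral_congr_ae ?_
  filter_upwards [ae_restrict_of_ae hys] with x' hx'
  exact hkV (x, y) (x', y) hx hx'
end

section
/- Let 1 < p < ∞, let w be a scalar weight on a measure space D, let W be a measurable a.e.-positive-definite N×N matrix weight on D, let r : D → ℂ^N be a unit vector field with w^{1/p}‖W^{−1/p} r‖ ≤ C a.e. Then for every f ∈ L^p(W) and every ψ ∈ L^q(w) (q the Hölder conjugate), ∫_D |⟨f(t), r(t)⟩| |ψ(t)| w(t) dμ(t) ≤ C ‖f‖_{L^p(W)} ‖ψ‖_{L^q(w)}. -/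
open MeasureTheory ENNReal ComplexInnerProductSpace
open scoped ComplexOrder

theorem mpow_isHermitian {N : ℕ} (A : Matrix (Fin N) (Fin N) ℂ) (s : ℝ) :
    (mpow A s).IsHermitian := by
  unfold mpow
  split_ifs with hA
  · rw [← hA.cfc_eq]
    exact cfc_predicate (R := ℝ) _ A
  · exact Matrix.isHermitian_zero

theorem mpow_mul_neg {N : ℕ} {A : Matrix (Fin N) (Fin N) ℂ} (hA : A.PosDef) (s : ℝ) :
    mpow A s * mpow A (-s) = 1 := by
  unfold mpow
  rw [dif_pos hA.isHermitian, dif_pos hA.isHermitian]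
  unfold Matrix.IsHermitian.cfc
  rw [← map_mul, Matrix.diagonal_mul_diagonal]
  have h1 : (Matrix.diagonal fun i =>
      ((RCLike.ofReal ∘ (fun x : ℝ => x ^ s) ∘ hA.isHermitian.eigenvalues) i : ℂ) *
      (RCLike.ofReal ∘ (fun x : ℝ => x ^ (-s)) ∘ hA.isHermitian.eigenvalues) i) = 1 := by
    rw [← Matrix.diagonal_one]
    congr 1
    funext i
    have h := hA.eigenvalues_pos i
    simp only [Function.comp_apply]
    rw [← RCLike.ofReal_mul, ← Real.rpow_add h]
    simp
  rw [h1, map_one]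

theorem inner_le_mpow {N : ℕ} {A : Matrix (Fin N) (Fin N) ℂ} (hA : A.PosDef) (s : ℝ)
    (x y : EuclideanSpace ℂ (Fin N)) :
    ‖(⟪x, y⟫ : ℂ)‖ ≤ ‖Matrix.toEuclideanLin (mpow A s) x‖ *
      ‖Matrix.toEuclideanLin (mpow A (-s)) y‖ := by
  have h1 := Matrix.isSymmetric_toEuclideanLin_iff.2 (mpow_isHermitian A s)
  have h2 : Matrix.toEuclideanLin (mpow A s) (Matrix.toEuclideanLin (mpow A (-s)) y) = y := by
    simp [Matrix.toEuclideanLin_apply, Matrix.mulVec_mulVec, mpow_mul_neg hA]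
  calc ‖(⟪x, y⟫ : ℂ)‖ = ‖(⟪Matrix.toEuclideanLin (mpow A s) x,
        Matrix.toEuclideanLin (mpow A (-s)) y⟫ : ℂ)‖ := by
        rw [h1, h2]
    _ ≤ _ := norm_inner_le_norm _ _

/-- Duality form of the sufficiency direction: if `w^{1/p}‖W^{−1/p}r‖ ≤ C` a.e. then
`∫ |⟨f,r⟩||ψ| w ≤ C‖f‖_{L^p(W)}‖ψ‖_{L^q(w)}`. -/
theorem projection_duality_estimate
    {N : ℕ} {D : Type*} [MeasurableSpace D] (μ : Measure D)
    (p q : ℝ) (hp : 1 < p) (hpq : 1 / p + 1 / q = 1)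
    (W : D → Matrix (Fin N) (Fin N) ℂ)
    (hWmeas : ∀ i j, Measurable fun t => W t i j)
    (hWpos : ∀ᵐ t ∂μ, (W t).PosDef)
    (w : D → ℝ) (hwmeas : Measurable w) (hwpos : ∀ᵐ t ∂μ, 0 < w t)
    (r : D → EuclideanSpace ℂ (Fin N))
    (hrmeas : ∀ k, Measurable fun t => (⟪EuclideanSpace.single k (1 : ℂ), r t⟫ : ℂ))
    (hr : ∀ᵐ t ∂μ, ‖r t‖ = 1)
    (C : ℝ)
    (hbound : ∀ᵐ t ∂μ,
      (w t) ^ (1 / p) * ‖Matrix.toEuclideanLin (mpow (W t) (-(1 / p))) (r t)‖ ≤ C)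
    (f : D → EuclideanSpace ℂ (Fin N))
    (hfmeas : ∀ k, Measurable fun t => (⟪EuclideanSpace.single k (1 : ℂ), f t⟫ : ℂ))
    (ψ : D → ℂ) (hψmeas : Measurable ψ) :
    ∫⁻ t, (‖(⟪f t, r t⟫ : ℂ)‖₊ : ℝ≥0∞) * (‖ψ t‖₊ : ℝ≥0∞) * ENNReal.ofReal (w t) ∂μ
      ≤ ENNReal.ofReal C *
        (∫⁻ t, (‖Matrix.toEuclideanLin (mpow (W t) (1 / p)) (f t)‖₊ : ℝ≥0∞) ^ p ∂μ)
          ^ (1 / p) *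
        (∫⁻ t, (‖ψ t‖₊ : ℝ≥0∞) ^ q * ENNReal.ofReal (w t) ∂μ) ^ (1 / q) := by
  have hp0 : 0 < p := by linarith
  have hip : 0 < 1 / p := by positivity
  have hip1 : 1 / p < 1 := by rw [div_lt_one hp0]; exact hp
  have hiq : 0 < 1 / q := by linarith
  have hq0 : 0 < q := by simpa using hiq
  have hconj : p.HolderConjugate q := by
    rw [Real.holderConjugate_iff]
    exact ⟨hp, by simpa using hpq⟩
  have hin : Measurable fun t => (⟪f t, r t⟫ : ℂ) := by
    simp only [EuclideanSpace.inner_single_left, map_one, one_mul] at hfmeas hrmeas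
    simp only [PiLp.inner_apply, RCLike.inner_apply]
    refine Finset.measurable_sum _ fun i _ => ?_
    exact (hrmeas i).mul (Complex.continuous_conj.measurable.comp (hfmeas i))
  set k : D → ℝ≥0∞ := fun t =>
    (‖(⟪f t, r t⟫ : ℂ)‖₊ : ℝ≥0∞) * ENNReal.ofReal (w t) ^ (1 / p) with hk
  set g : D → ℝ≥0∞ := fun t => (‖ψ t‖₊ : ℝ≥0∞) * ENNReal.ofReal (w t) ^ (1 / q) with hg
  have hkm : Measurable k := by
    exact hin.nnnorm.coe_nnreal_ennreal.mul (hwmeas.ennreal_ofReal.pow_const _)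
  have hgm : Measurable g := by
    exact hψmeas.nnnorm.coe_nnreal_ennreal.mul (hwmeas.ennreal_ofReal.pow_const _)
  have hkb : ∀ᵐ t ∂μ, k t ≤ ENNReal.ofReal C *
      (‖Matrix.toEuclideanLin (mpow (W t) (1 / p)) (f t)‖₊ : ℝ≥0∞) := by
    filter_upwards [hWpos, hwpos, hbound] with t hW hw hb
    have h1 := inner_le_mpow hW (1 / p) (f t) (r t)
    have hwp : 0 ≤ w t ^ (1 / p) := by positivity
    have h2 : ‖(⟪f t, r t⟫ : ℂ)‖ * w t ^ (1 / p) ≤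
        C * ‖Matrix.toEuclideanLin (mpow (W t) (1 / p)) (f t)‖ := by
      calc _ ≤ _ := mul_le_mul_of_nonneg_right h1 hwp
        _ = (w t ^ (1 / p) * ‖Matrix.toEuclideanLin (mpow (W t) (-(1 / p))) (r t)‖) *
            ‖Matrix.toEuclideanLin (mpow (W t) (1 / p)) (f t)‖ := by ring
        _ ≤ _ := mul_le_mul_of_nonneg_right hb (norm_nonneg _)
    have h3 := ENNReal.ofReal_le_ofReal h2
    rw [ENNReal.ofReal_mul (norm_nonneg _), ENNReal.ofReal_mul' (norm_nonneg _),
      ← ENNReal.ofReal_rpow_of_pos hw, ofReal_norm_eq_enorm, ofReal_norm_eq_enorm] at h3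
    exact h3
  have hfac : ∀ t, (‖(⟪f t, r t⟫ : ℂ)‖₊ : ℝ≥0∞) * (‖ψ t‖₊ : ℝ≥0∞) * ENNReal.ofReal (w t)
      = (k * g) t := by
    intro t
    have : ENNReal.ofReal (w t) =
        ENNReal.ofReal (w t) ^ (1 / p) * ENNReal.ofReal (w t) ^ (1 / q) := by
      rw [← ENNReal.rpow_add_of_nonneg _ _ hip.le hiq.le, hpq, ENNReal.rpow_one]
    simp only [Pi.mul_apply, hk, hg]
    conv_lhs => rw [this]
    ring
  have hgq : ∀ t, g t ^ q = (‖ψ t‖₊ : ℝ≥0∞) ^ q * ENNReal.ofReal (w t) := by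
    intro t
    simp only [hg]
    rw [ENNReal.mul_rpow_of_nonneg _ _ hq0.le, ← ENNReal.rpow_mul, one_div_mul_cancel hq0.ne',
      ENNReal.rpow_one]
  have hkp : (∫⁻ t, k t ^ p ∂μ) ^ (1 / p) ≤ ENNReal.ofReal C *
      (∫⁻ t, (‖Matrix.toEuclideanLin (mpow (W t) (1 / p)) (f t)‖₊ : ℝ≥0∞) ^ p ∂μ)
        ^ (1 / p) := by
    calc (∫⁻ t, k t ^ p ∂μ) ^ (1 / p)
        ≤ (∫⁻ t, ENNReal.ofReal C ^ p *
          (‖Matrix.toEuclideanLin (mpow (W t) (1 / p)) (f t)‖₊ : ℝ≥0∞) ^ p ∂μ) ^ (1 / p) := by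
          refine ENNReal.rpow_le_rpow (lintegral_mono_ae ?_) hip.le
          filter_upwards [hkb] with t ht
          rw [← ENNReal.mul_rpow_of_nonneg _ _ hp0.le]
          exact ENNReal.rpow_le_rpow ht hp0.le
      _ = _ := by
          rw [lintegral_const_mul' _ _ (ENNReal.rpow_ne_top_of_nonneg hp0.le ENNReal.ofReal_ne_top),
            ENNReal.mul_rpow_of_nonneg _ _ hip.le, ← ENNReal.rpow_mul, mul_one_div_cancel hp0.ne',
            ENNReal.rpow_one]
  simp only [hfac, ← hgq]
  exact (ENNReal.lintegral_mul_le_Lp_mul_Lq μ hconj hkm.aemeasurable hgm.aemeasurable).trans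
    (mul_le_mul_left hkp _)
end
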